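/- Suppose [p_1,q_1] and [p_2,q_2] are two excursions of Ȳ contained in [τ_l, τ_{l+1}] for some l ≥ 0, with q_1 < p_2. Then S_k ≠ 0 for every k with τ_l < k ≤ p_2, and S_{p_2 + 1} = 0; that is, the first zero of S after τ_l is p_2 + 1. -/

import Mathlib

noncomputable section

/-- The walk `S` associated with the sign sequence `X : {1,2,…} → {−1,1}`:
`S 0 = 0`, `S n = X 1 + ⋯ + X n`. -/
def cvWalk (X : ℕ → ℤ) (n : ℕ) : ℤ := ∑ j ∈ Finset.Icc 1 n, X j

/-- The crossing times of `S`: `τ 0 = 0` and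
`τ (l+1) = min {i > τ l : S (i-1) * S (i+1) < 0}`. -/
def cvTau (X : ℕ → ℤ) : ℕ → ℕ
  | 0 => 0
  | l + 1 => sInf {i : ℕ | cvTau X l < i ∧ cvWalk X (i - 1) * cvWalk X (i + 1) < 0}

/-- The increments of the Csaki–Vincze transform `S̄ = T(S)`:
`X̄ j = Σ_{l ≥ 0} (−1)^(l+1) · X 1 · X (j+1) · 1_{τ l + 1 ≤ j ≤ τ (l+1)}`
(the sum may be truncated to `l ≤ j` since `l ≤ τ l` whenever `τ l + 1 ≤ j`). -/
def cvXbar (X : ℕ → ℤ) (j : ℕ) : ℤ :=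
  ∑ l ∈ Finset.range (j + 1),
    (-1 : ℤ) ^ (l + 1) * X 1 * X (j + 1) *
      (if cvTau X l + 1 ≤ j ∧ j ≤ cvTau X (l + 1) then 1 else 0)

/-- The Csaki–Vincze transform `S̄ = T(S)`. -/
def cvSbar (X : ℕ → ℤ) (n : ℕ) : ℤ := ∑ j ∈ Finset.Icc 1 n, cvXbar X j

/-- `Ȳ`-type process of a walk `f`: `max_{0 ≤ k ≤ n} f k − f n`. -/
def cvYof (f : ℕ → ℤ) (n : ℕ) : ℤ :=
  (Finset.range (n + 1)).sup' Finset.nonempty_range_add_one f - f n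

/-- `Ȳ n = max_{0 ≤ k ≤ n} S̄ k − S̄ n`. -/
def cvYbar (X : ℕ → ℤ) (n : ℕ) : ℤ := cvYof (cvSbar X) n

/-- `[p, q]` is an excursion of `Ȳ`: `Ȳ p = Ȳ (p−1) = Ȳ q = Ȳ (q+1) = 0`
(with the convention `Ȳ (−1) = 0`, which is handled by truncated subtraction since
`Ȳ 0 = 0` anyway) and for every `p ≤ j < q`, `Ȳ j = 0` implies `Ȳ (j+1) = 1`. -/
def cvIsExcursion (X : ℕ → ℤ) (p q : ℕ) : Prop :=
  p < q ∧ cvYbar X p = 0 ∧ cvYbar X (p - 1) = 0 ∧ cvYbar X q = 0 ∧ cvYbar X (q + 1) = 0 ∧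
    ∀ j, p ≤ j → j < q → cvYbar X j = 0 → cvYbar X (j + 1) = 1

theorem cvx_walk_succ (X : ℕ → ℤ) (n : ℕ) : cvWalk X (n + 1) = cvWalk X n + X (n + 1) := by
  unfold cvWalk
  rw [Finset.sum_Icc_succ_top (by omega)]

theorem cvx_sbar_succ (X : ℕ → ℤ) (n : ℕ) : cvSbar X (n + 1) = cvSbar X n + cvXbar X (n + 1) := by
  unfold cvSbar
  rw [Finset.sum_Icc_succ_top (by omega)]

theorem cvx_tau_spec (X : ℕ → ℤ)
    (hinf : {i : ℕ | 1 ≤ i ∧ cvWalk X (i - 1) * cvWalk X (i + 1) < 0}.Infinite) (l : ℕ) :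
    cvTau X l < cvTau X (l + 1) ∧
      cvWalk X (cvTau X (l + 1) - 1) * cvWalk X (cvTau X (l + 1) + 1) < 0 := by
  have hne : {i : ℕ | cvTau X l < i ∧ cvWalk X (i - 1) * cvWalk X (i + 1) < 0}.Nonempty := by
    obtain ⟨i, hi, hlt⟩ := hinf.exists_gt (cvTau X l)
    exact ⟨i, hlt, hi.2⟩
  have := Nat.sInf_mem hne
  rw [cvTau]
  exact this

theorem cvx_tau_min (X : ℕ → ℤ) (l i : ℕ) (h1 : cvTau X l < i) (h2 : i < cvTau X (l + 1)) :
    0 ≤ cvWalk X (i - 1) * cvWalk X (i + 1) := by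
  by_contra h
  push Not at h
  rw [cvTau] at h2
  exact Nat.notMem_of_lt_sInf h2 ⟨h1, h⟩

theorem cvx_between (X : ℕ → ℤ) (hX : ∀ j, 1 ≤ j → X j = 1 ∨ X j = -1)
    (l : ℕ) (s : ℤ) (hs : s = 1 ∨ s = -1) (h0 : cvWalk X (cvTau X l) = 0)
    (h1 : cvWalk X (cvTau X l + 1) = s) (d : ℕ) :
    cvTau X l + d + 1 ≤ cvTau X (l + 1) →
      0 ≤ s * cvWalk X (cvTau X l + d) ∧ 0 ≤ s * cvWalk X (cvTau X l + d + 1) := by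
  induction d with
  | zero =>
    intro _
    simp only [add_zero]
    rw [h0, h1]
    rcases hs with rfl | rfl <;> simp
  | succ d ih =>
    intro h
    obtain ⟨a, b⟩ := ih (by omega)
    refine ⟨b, ?_⟩
    have hm := cvx_tau_min X l (cvTau X l + d + 1) (by omega) (by omega)
    have e1 := cvx_walk_succ X (cvTau X l + d)
    have e2 := cvx_walk_succ X (cvTau X l + d + 1)
    have x1 := hX (cvTau X l + d + 1) (by omega)
    have x2 := hX (cvTau X l + d + 1 + 1) (by omega)
    simp only [Nat.add_sub_cancel] at hm
    rw [← add_assoc]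
    generalize cvWalk X (cvTau X l + d + 1 + 1) = w2 at *
    generalize cvWalk X (cvTau X l + d + 1) = w1 at *
    generalize cvWalk X (cvTau X l + d) = w0 at *
    by_contra hc
    have : s * w1 = 0 := by rcases hs with rfl | rfl <;> omega
    have hw1 : w1 = 0 := by rcases hs with rfl | rfl <;> omega
    rcases hs with rfl | rfl <;> rcases x1 with x1 | x1 <;> rcases x2 with x2 | x2 <;>
      rw [x1] at e1 <;> rw [x2] at e2 <;>
      first
      | omega
      | (have : w0 = 1 := by omega
         have : w2 = -1 := by omega
         subst w0 w2; omega)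
      | (have : w0 = -1 := by omega
         have : w2 = 1 := by omega
         subst w0 w2; omega)

theorem cvx_tau_val (X : ℕ → ℤ) (hX : ∀ j, 1 ≤ j → X j = 1 ∨ X j = -1)
    (hinf : {i : ℕ | 1 ≤ i ∧ cvWalk X (i - 1) * cvWalk X (i + 1) < 0}.Infinite) (l : ℕ) :
    cvWalk X (cvTau X l) = 0 ∧ cvWalk X (cvTau X l + 1) = (-1) ^ l * X 1 := by
  induction l with
  | zero => simp [cvTau, cvWalk]
  | succ l ih =>
    obtain ⟨a, b⟩ := ih
    obtain ⟨hlt, hneg⟩ := cvx_tau_spec X hinf l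
    have hs : (-1) ^ l * X 1 = 1 ∨ (-1) ^ l * X 1 = -1 := by
      rcases neg_one_pow_eq_or ℤ l with h | h <;> rcases hX 1 le_rfl with h' | h' <;>
        simp [h, h']
    have hp : (-1) ^ (l + 1) * X 1 = -((-1) ^ l * X 1) := by ring
    rw [hp]
    generalize (-1) ^ l * X 1 = s at *
    obtain ⟨d, hd⟩ : ∃ d, cvTau X (l + 1) = cvTau X l + d + 1 :=
      ⟨cvTau X (l + 1) - cvTau X l - 1, by omega⟩
    have hb := cvx_between X hX l s hs a b d (by omega)
    rw [hd] at hneg ⊢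
    have e1 := cvx_walk_succ X (cvTau X l + d)
    have e2 := cvx_walk_succ X (cvTau X l + d + 1)
    have x1 := hX (cvTau X l + d + 1) (by omega)
    have x2 := hX (cvTau X l + d + 1 + 1) (by omega)
    simp only [Nat.add_sub_cancel] at hneg
    generalize cvWalk X (cvTau X l + d + 1 + 1) = w2 at *
    generalize cvWalk X (cvTau X l + d + 1) = w1 at *
    generalize cvWalk X (cvTau X l + d) = w0 at *
    have hb1 := hb.1
    have hb2 := hb.2
    rcases mul_neg_iff.mp hneg with ⟨_, _⟩ | ⟨_, _⟩ <;>
    rcases hs with rfl | rfl <;> rcases x1 with x1 | x1 <;> rcases x2 with x2 | x2 <;>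
      rw [x1] at e1 <;> rw [x2] at e2 <;> omega

theorem cvx_xbar (X : ℕ → ℤ)
    (hinf : {i : ℕ | 1 ≤ i ∧ cvWalk X (i - 1) * cvWalk X (i + 1) < 0}.Infinite) (l j : ℕ)
    (h1 : cvTau X l + 1 ≤ j) (h2 : j ≤ cvTau X (l + 1)) :
    cvXbar X j = (-1 : ℤ) ^ (l + 1) * X 1 * X (j + 1) := by
  have hmono : StrictMono (cvTau X) := strictMono_nat_of_lt_succ fun n => (cvx_tau_spec X hinf n).1
  have hl : l ≤ cvTau X l := hmono.le_apply
  unfold cvXbar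
  rw [Finset.sum_eq_single_of_mem l (Finset.mem_range.mpr (by omega))]
  · simp [h1, h2]
  · intro m _ hm
    rw [if_neg, mul_zero]
    rintro ⟨a, b⟩
    rcases lt_or_gt_of_ne hm with h | h
    · have := hmono.monotone (show m + 1 ≤ l by omega)
      omega
    · have := hmono.monotone (show l + 1 ≤ m by omega)
      omega

theorem cvx_ybar (X : ℕ → ℤ) (n k : ℕ) (h : cvYbar X n = 0) (hk : k ≤ n) :
    cvSbar X k ≤ cvSbar X n := by
  unfold cvYbar cvYof at h
  have := Finset.le_sup' (s := Finset.range (n + 1)) (cvSbar X) (Finset.mem_range.mpr (by omega : k < n + 1))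
  omega

theorem cvx_sbar (X : ℕ → ℤ) (hX : ∀ j, 1 ≤ j → X j = 1 ∨ X j = -1)
    (hinf : {i : ℕ | 1 ≤ i ∧ cvWalk X (i - 1) * cvWalk X (i + 1) < 0}.Infinite) (l d : ℕ) :
    cvTau X l + d ≤ cvTau X (l + 1) →
    cvSbar X (cvTau X l + d) =
      cvSbar X (cvTau X l) + 1 - (-1) ^ l * X 1 * cvWalk X (cvTau X l + d + 1) := by
  induction d with
  | zero =>
    intro _
    simp only [add_zero]
    rw [(cvx_tau_val X hX hinf l).2]
    rcases neg_one_pow_eq_or ℤ l with h | h <;> rcases hX 1 le_rfl with h' | h' <;>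
        simp [h, h']
  | succ d ih =>
    intro h
    rw [← add_assoc, cvx_sbar_succ, ih (by omega), cvx_walk_succ X (cvTau X l + d + 1),
      cvx_xbar X hinf l _ (by omega) (by omega)]
    ring

/-- If `[p₁, q₁]` and `[p₂, q₂]` are two excursions of `Ȳ` contained in
`[τ l, τ (l+1)]` with `q₁ < p₂`, then `S k ≠ 0` for every `τ l < k ≤ p₂` and
`S (p₂ + 1) = 0`; that is, the first zero of `S` after `τ l` is `p₂ + 1`. -/
theorem cv_first_zero_case_iii (X : ℕ → ℤ) (hX : ∀ j, 1 ≤ j → X j = 1 ∨ X j = -1)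
    (hinf : {i : ℕ | 1 ≤ i ∧ cvWalk X (i - 1) * cvWalk X (i + 1) < 0}.Infinite)
    (l p₁ q₁ p₂ q₂ : ℕ)
    (hexc1 : cvIsExcursion X p₁ q₁) (hexc2 : cvIsExcursion X p₂ q₂)
    (hp1 : cvTau X l ≤ p₁) (hq2 : q₂ ≤ cvTau X (l + 1)) (horder : q₁ < p₂) :
    (∀ k, cvTau X l < k → k ≤ p₂ → cvWalk X k ≠ 0) ∧ cvWalk X (p₂ + 1) = 0 := by
  obtain ⟨hpq1, -, -, hYq1, hYq1', -⟩ := hexc1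
  obtain ⟨hpq2, hYp2, hYp2', -, -, -⟩ := hexc2
  obtain ⟨t0, t1⟩ := cvx_tau_val X hX hinf l
  have hs : (-1) ^ l * X 1 = 1 ∨ (-1) ^ l * X 1 = -1 := by
    rcases neg_one_pow_eq_or ℤ l with h | h <;> rcases hX 1 le_rfl with h' | h' <;>
      simp [h, h']
  have hS : ∀ k, cvTau X l ≤ k → k < cvTau X (l + 1) →
      cvSbar X k = cvSbar X (cvTau X l) + 1 - (-1) ^ l * X 1 * cvWalk X (k + 1) ∧
      0 ≤ (-1) ^ l * X 1 * cvWalk X (k + 1) := by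
    intro k h1 h2
    obtain ⟨d, rfl⟩ := Nat.exists_eq_add_of_le h1
    exact ⟨cvx_sbar X hX hinf l d (by omega),
      (cvx_between X hX l _ hs t0 t1 d (by omega)).2⟩
  have hstep : ∀ k, cvTau X l ≤ k → k < cvTau X (l + 1) →
      cvSbar X (k + 1) = cvSbar X k + 1 ∨ cvSbar X (k + 1) = cvSbar X k - 1 := by
    intro k h1 h2
    rw [cvx_sbar_succ, cvx_xbar X hinf l _ (by omega) (by omega)]
    rw [pow_succ]
    rcases neg_one_pow_eq_or ℤ l with h | h <;> rcases hX 1 le_rfl with h' | h' <;>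
      rcases hX (k + 1 + 1) (by omega) with h'' | h'' <;> simp [h, h', h''] <;> omega
  obtain ⟨m, rfl⟩ : ∃ m, p₂ = m + 1 := ⟨p₂ - 1, by omega⟩
  simp only [Nat.add_sub_cancel] at hYp2'
  have a1 := cvx_ybar X q₁ (cvTau X l) hYq1 (by omega)
  have a2 := cvx_ybar X (q₁ + 1) q₁ hYq1' (by omega)
  have a3 := hstep q₁ (by omega) (by omega)
  have a4 := cvx_ybar X (m + 1) (q₁ + 1) hYp2 (by omega)
  have a5 := hS (m + 1) (by omega) (by omega)
  have a6 := cvx_ybar X (m + 1) m hYp2 (by omega)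
  have a7 := hstep m (by omega) (by omega)
  constructor
  · intro k hk1 hk2 hk0
    obtain ⟨j, rfl⟩ : ∃ j, k = j + 1 := ⟨k - 1, by omega⟩
    have b1 := hS j (by omega) (by omega)
    have b2 := cvx_ybar X m j hYp2' (by omega)
    rw [hk0, mul_zero] at b1
    omega
  · have : (-1) ^ l * X 1 * cvWalk X (m + 1 + 1) = 0 := by omega
    rcases hs with h | h <;> rw [h] at this <;> omega
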